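/- Let n ≥ 2 and let m = 2m₀ be even with m₀ ≥ 1. Let H be a Hankel tensor of order m and dimension n with parameter vector h ∈ ℂ^{d+1}, d = (n−1)m, let s = d/2 = (n−1)m₀, and let r = rank C_{d−s,s}(h). Suppose r < s+1, the kernel of C_{d−r,r}(h) is nonzero, and every nonzero f = (f_0,…,f_r) ∈ ker C_{d−r,r}(h) has binary form f(x,y) = f_0 x^r + ⋯ + f_r y^r that is NOT squarefree as a homogeneous polynomial in ℂ[x,y]. Then rank_V(H) = d−r+2, brank_V(H) = brank_S(H) = brank(H) = r, and r ≤ rank_S(H) ≤ d−r+2. -/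

import Mathlib

open scoped BigOperators
open MvPolynomial

noncomputable section

/-- An order-`m`, dimension-`n` complex tensor. -/
abbrev Tensor (m n : ℕ) := (Fin m → Fin n) → ℂ

/-- Tensors expressible as a sum of `r` rank-one tensors. -/
def cpSet (m n r : ℕ) : Set (Tensor m n) :=
  {T | ∃ u : Fin r → Fin m → Fin n → ℂ, ∀ i, T i = ∑ k, ∏ j, u k j (i j)}

/-- Tensors expressible as a sum of `r` symmetric rank-one tensors. -/
def symSet (m n r : ℕ) : Set (Tensor m n) :=
  {T | ∃ v : Fin r → Fin n → ℂ, ∀ i, T i = ∑ k, ∏ j, v k (i j)}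

/-- The Vandermonde vector `v(a,b) ∈ ℂ^n`, `v(a,b)_i = a^(n-1-i) * b^i`. -/
def vand (n : ℕ) (a b : ℂ) : Fin n → ℂ := fun i => a ^ (n - 1 - (i : ℕ)) * b ^ (i : ℕ)

/-- Tensors expressible as a sum of `r` Vandermonde rank-one tensors. -/
def vandSet (m n r : ℕ) : Set (Tensor m n) :=
  {T | ∃ ab : Fin r → ℂ × ℂ, ∀ i, T i = ∑ k, ∏ j, vand n (ab k).1 (ab k).2 (i j)}

/-- The cp rank of a tensor. -/
def cpRank {m n : ℕ} (T : Tensor m n) : ℕ := sInf {r | T ∈ cpSet m n r}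

/-- The symmetric rank of a tensor. -/
def symRank {m n : ℕ} (T : Tensor m n) : ℕ := sInf {r | T ∈ symSet m n r}

/-- The Vandermonde rank of a tensor. -/
def vandRank {m n : ℕ} (T : Tensor m n) : ℕ := sInf {r | T ∈ vandSet m n r}

/-- The border rank of a tensor (closure in the product topology). -/
def brank {m n : ℕ} (T : Tensor m n) : ℕ := sInf {r | T ∈ closure (cpSet m n r)}

/-- The symmetric border rank of a tensor. -/
def bSymRank {m n : ℕ} (T : Tensor m n) : ℕ := sInf {r | T ∈ closure (symSet m n r)}

/-- The border Vandermonde rank of a tensor. -/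
def bVandRank {m n : ℕ} (T : Tensor m n) : ℕ := sInf {r | T ∈ closure (vandSet m n r)}

/-- `T` is the Hankel tensor with parameter vector `h ∈ ℂ^{(n-1)m+1}`. -/
def IsHankel {m n : ℕ} (T : Tensor m n) (h : Fin ((n - 1) * m + 1) → ℂ) : Prop :=
  ∀ i : Fin m → Fin n, T i = h ⟨∑ j, (i j : ℕ), by
    have h1 : ∑ j, (i j : ℕ) ≤ ∑ _j : Fin m, (n - 1) :=
      Finset.sum_le_sum fun j _ => Nat.le_pred_of_lt (i j).isLt
    simp only [Finset.sum_const, Finset.card_univ, Fintype.card_fin, smul_eq_mul] at h1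
    exact Nat.lt_succ_of_le (h1.trans (le_of_eq (Nat.mul_comm m (n - 1))))⟩

/-- The `(d-r+1) × (r+1)` Hankel (catalecticant) matrix `C_{d-r,r}(h)` of `h ∈ ℂ^{d+1}`. -/
def hMat (d r : ℕ) (h : Fin (d + 1) → ℂ) : Matrix (Fin (d - r + 1)) (Fin (r + 1)) ℂ :=
  Matrix.of fun i j => if hij : (i : ℕ) + (j : ℕ) < d + 1 then h ⟨(i : ℕ) + (j : ℕ), hij⟩ else 0

/-- The binary form `f(x,y) = f_0 x^r + f_1 x^(r-1) y + ⋯ + f_r y^r`. -/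
def binForm (r : ℕ) (f : Fin (r + 1) → ℂ) : MvPolynomial (Fin 2) ℂ :=
  ∑ j : Fin (r + 1), C (f j) * X 0 ^ (r - (j : ℕ)) * X 1 ^ (j : ℕ)

/-- The binary form `h(x,y) = ∑_j binom(d,j) h_j x^j y^(d-j)` associated with `h ∈ ℂ^{d+1}`. -/
def assocForm (d : ℕ) (h : Fin (d + 1) → ℂ) : MvPolynomial (Fin 2) ℂ :=
  ∑ j : Fin (d + 1), C ((d.choose (j : ℕ) : ℂ) * h j) * X 0 ^ (j : ℕ) * X 1 ^ (d - (j : ℕ))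

/-- Parameter vectors of binary forms of Waring rank at most `r`. -/
def waringSet (d r : ℕ) : Set (Fin (d + 1) → ℂ) :=
  {h | ∃ ab : Fin r → ℂ × ℂ,
    assocForm d h = ∑ i, (C (ab i).1 * X 0 + C (ab i).2 * X 1) ^ d}

/-- The Waring rank of the binary form associated with `h`. -/
def waringRank (d : ℕ) (h : Fin (d + 1) → ℂ) : ℕ := sInf {r | h ∈ waringSet d r}

/-- The border Waring rank of the binary form associated with `h`. -/
def bWaringRank (d : ℕ) (h : Fin (d + 1) → ℂ) : ℕ := sInf {r | h ∈ closure (waringSet d r)}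

/-! ### The moment functional and apolar polynomials -/

/-- The linear functional on `ℂ[X]` sending `X ^ i` to `η i`. -/
def momentFunctional (η : ℕ → ℂ) : Polynomial ℂ →ₗ[ℂ] ℂ :=
  Polynomial.lsum fun i => η i • LinearMap.id

lemma momentFunctional_monomial (η : ℕ → ℂ) (i : ℕ) (c : ℂ) :
    momentFunctional η (Polynomial.monomial i c) = c * η i := by
  simp [momentFunctional, Polynomial.lsum_apply, Polynomial.sum_monomial_index, mul_comm]

lemma momentFunctional_X_pow (η : ℕ → ℂ) (i : ℕ) :
    momentFunctional η (Polynomial.X ^ i) = η i := by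
  rw [← Polynomial.monomial_one_right_eq_X_pow, momentFunctional_monomial, one_mul]

lemma momentFunctional_eq_sum (η : ℕ → ℂ) {p : Polynomial ℂ} {N : ℕ} (hp : p.natDegree < N) :
    momentFunctional η p = ∑ i ∈ Finset.range N, p.coeff i * η i := by
  conv_lhs => rw [p.as_sum_range' N hp]
  simp [map_sum, momentFunctional_monomial]

/-- The polynomial `p`, viewed as a binary form of degree `k`, is apolar to the moments
`η 0, …, η d`. -/
def IsApolar (η : ℕ → ℂ) (d k : ℕ) (p : Polynomial ℂ) : Prop :=
  p.natDegree ≤ k ∧ ∀ q : Polynomial ℂ, q.natDegree ≤ d - k → momentFunctional η (p * q) = 0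

lemma isApolar_iff_X_pow {η : ℕ → ℂ} {d k : ℕ} {p : Polynomial ℂ} :
    IsApolar η d k p ↔ p.natDegree ≤ k ∧
      ∀ i ≤ d - k, momentFunctional η (p * Polynomial.X ^ i) = 0 := by
  refine and_congr_right fun _ => ⟨fun h i hi => h _ (by simpa using hi), fun h q hq => ?_⟩
  rw [q.as_sum_range' (d - k + 1) (by omega), Finset.mul_sum, map_sum]
  refine Finset.sum_eq_zero fun i hi => ?_
  rw [← Polynomial.C_mul_X_pow_eq_monomial, mul_left_comm, ← Polynomial.smul_eq_C_mul, map_smul,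
    h i (by simp at hi; omega), smul_zero]

/-- The polynomial `f_0 + f_1 X + ⋯ + f_k X ^ k`. -/
def coeffPoly {k : ℕ} (f : Fin (k + 1) → ℂ) : Polynomial ℂ :=
  ∑ j : Fin (k + 1), Polynomial.monomial (j : ℕ) (f j)

lemma coeff_coeffPoly {k : ℕ} (f : Fin (k + 1) → ℂ) (j : Fin (k + 1)) :
    (coeffPoly f).coeff j = f j := by
  simp [coeffPoly, Polynomial.coeff_monomial, Fin.val_inj]

lemma natDegree_coeffPoly_le {k : ℕ} (f : Fin (k + 1) → ℂ) : (coeffPoly f).natDegree ≤ k :=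
  Polynomial.natDegree_sum_le_of_forall_le _ _ fun j _ =>
    (Polynomial.natDegree_monomial_le _).trans (by omega)

lemma coeffPoly_coeff {k : ℕ} {p : Polynomial ℂ} (hp : p.natDegree ≤ k) :
    coeffPoly (fun j : Fin (k + 1) => p.coeff j) = p := by
  conv_rhs => rw [p.as_sum_range' (k + 1) (by omega)]
  exact Fin.sum_univ_eq_sum_range (fun j => Polynomial.monomial j (p.coeff j)) (k + 1)

/-- The extension by zero of a parameter vector. -/
def extendZero {d : ℕ} (h : Fin (d + 1) → ℂ) (i : ℕ) : ℂ :=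
  if hi : i < d + 1 then h ⟨i, hi⟩ else 0

lemma extendZero_val {d : ℕ} (h : Fin (d + 1) → ℂ) (i : Fin (d + 1)) : extendZero h i = h i :=
  dif_pos i.isLt

lemma hMat_mulVec_apply {d k : ℕ} (h : Fin (d + 1) → ℂ) (f : Fin (k + 1) → ℂ)
    (i : Fin (d - k + 1)) :
    (hMat d k h).mulVec f i =
      momentFunctional (extendZero h) (coeffPoly f * Polynomial.X ^ (i : ℕ)) := by
  simp only [coeffPoly, Finset.sum_mul, map_sum, Matrix.mulVec, dotProduct,
    Polynomial.monomial_mul_X_pow, momentFunctional_monomial]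
  refine Finset.sum_congr rfl fun j _ => ?_
  simp [hMat, extendZero, mul_comm, add_comm]

lemma hMat_mulVec_eq_zero_iff {d k : ℕ} (h : Fin (d + 1) → ℂ) (f : Fin (k + 1) → ℂ) :
    (hMat d k h).mulVec f = 0 ↔ IsApolar (extendZero h) d k (coeffPoly f) := by
  rw [isApolar_iff_X_pow, funext_iff]
  simp only [natDegree_coeffPoly_le, true_and, hMat_mulVec_apply, Pi.zero_apply]
  exact ⟨fun H i hi => H ⟨i, by omega⟩, fun H i => H i (by omega)⟩

lemma IsApolar.mul {η : ℕ → ℂ} {d k l : ℕ} {p q : Polynomial ℂ} (hp : IsApolar η d k p)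
    (hq : q.natDegree ≤ l) (hkl : k + l ≤ d) : IsApolar η d (k + l) (p * q) := by
  refine ⟨Polynomial.natDegree_mul_le_of_le hp.1 hq, fun u hu => ?_⟩
  rw [mul_assoc]
  exact hp.2 _ ((Polynomial.natDegree_mul_le_of_le hq hu).trans (by omega))

/-- A nonzero apolar form has degree at least the rank of the middle catalecticant. -/
lemma rank_hMat_le_of_isApolar {d s k : ℕ} (h : Fin (d + 1) → ℂ) (hsd : s ≤ d)
    {p : Polynomial ℂ} (hp0 : p ≠ 0) (hp : IsApolar (extendZero h) d k p) :
    (hMat d s h).rank ≤ k := by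
  by_contra! hk
  have hrank : (hMat d s h).rank ≤ s + 1 := by
    simpa using (hMat d s h).rank_le_width
  have hks : k ≤ s := by omega
  let φ : (Fin (s - k + 1) → ℂ) →ₗ[ℂ] (Fin (s + 1) → ℂ) :=
    LinearMap.pi fun j => Polynomial.lcoeff ℂ j ∘ₗ LinearMap.mulLeft ℂ p ∘ₗ
      ∑ i : Fin (s - k + 1), Polynomial.monomial (i : ℕ) ∘ₗ LinearMap.proj i
  have hφ (f) : coeffPoly (φ f) = p * coeffPoly f := by
    rw [← coeffPoly_coeff (p := p * coeffPoly f) (k := s)]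
    · congr 1
      ext j
      simp [φ, coeffPoly, Finset.mul_sum]
    · exact (Polynomial.natDegree_mul_le_of_le hp.1 (natDegree_coeffPoly_le f)).trans (by omega)
  have hinj : Function.Injective φ := by
    rw [injective_iff_map_eq_zero]
    intro f hf
    have := hφ f
    rw [hf] at this
    have h0 : coeffPoly f = 0 := by simpa [coeffPoly, hp0] using this.symm
    ext j
    rw [← coeff_coeffPoly f j, h0]
    simp
  have hle : LinearMap.range φ ≤ LinearMap.ker (hMat d s h).mulVecLin := by
    rintro _ ⟨f, rfl⟩
    rw [LinearMap.mem_ker, Matrix.mulVecLin_apply, hMat_mulVec_eq_zero_iff, hφ]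
    have := hp.mul (natDegree_coeffPoly_le f) (by omega)
    rwa [show k + (s - k) = s by omega] at this
  have h1 := Submodule.finrank_mono hle
  rw [LinearMap.finrank_range_of_inj hinj] at h1
  have h2 := (hMat d s h).mulVecLin.finrank_range_add_finrank_ker
  rw [← Matrix.rank] at h2
  simp at h1 h2
  omega

/-! ### Vandermonde decompositions of the parameter vector -/

/-- Parameter vectors of Hankel tensors of Vandermonde rank at most `k`. -/
def powerSumSet (d k : ℕ) : Set (Fin (d + 1) → ℂ) :=
  {h | ∃ ab : Fin k → ℂ × ℂ, ∀ i, h i = ∑ l, (ab l).1 ^ (d - (i : ℕ)) * (ab l).2 ^ (i : ℕ)}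

lemma mem_powerSumSet_of_isApolar_nodal {d : ℕ} (hd : d ≠ 0) (h : Fin (d + 1) → ℂ) (S : Finset ℂ)
    (hS : S.card ≤ d) (hap : IsApolar (extendZero h) d S.card (Lagrange.nodal S id)) :
    h ∈ powerSumSet d S.card := by
  set η := extendZero h
  have hmon : (Lagrange.nodal S (id : ℂ → ℂ)).Monic := Lagrange.nodal_monic
  have key (p : Polynomial ℂ) (hp : p.natDegree ≤ d) :
      momentFunctional η p =
        ∑ z ∈ S, momentFunctional η (Lagrange.basis S id z) * p.eval z := by
    have hrem : p %ₘ Lagrange.nodal S id = Lagrange.interpolate S id fun z => p.eval z := by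
      refine Lagrange.eq_interpolate_of_eval_eq _ (Set.injOn_id _) ?_ fun z hz => ?_
      · rw [← Lagrange.degree_nodal (v := (id : ℂ → ℂ))]
        exact Polynomial.degree_modByMonic_lt _ hmon
      · have := congrArg (Polynomial.eval (id z))
          (Polynomial.modByMonic_add_div p (Lagrange.nodal S (id : ℂ → ℂ)))
        rwa [Polynomial.eval_add, Polynomial.eval_mul, Lagrange.eval_nodal_at_node hz, zero_mul,
          add_zero] at this
    conv_lhs => rw [← Polynomial.modByMonic_add_div p (Lagrange.nodal S (id : ℂ → ℂ))]
    rw [map_add, hap.2, add_zero, hrem, Lagrange.interpolate_apply, map_sum]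
    · refine Finset.sum_congr rfl fun z hz => ?_
      rw [← Polynomial.smul_eq_C_mul, map_smul, smul_eq_mul, mul_comm]
    · rw [Polynomial.natDegree_divByMonic _ hmon, Lagrange.natDegree_nodal]
      omega
  choose root hroot using fun c : ℂ => IsAlgClosed.exists_pow_nat_eq c (Nat.pos_of_ne_zero hd)
  let e := S.equivFin.symm
  refine ⟨fun l => (root (momentFunctional η (Lagrange.basis S id (e l))),
    root (momentFunctional η (Lagrange.basis S id (e l))) * e l), fun i => ?_⟩
  rw [← extendZero_val h i, ← momentFunctional_X_pow (extendZero h), key _ (by simp; omega),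
    ← Finset.sum_coe_sort,
    ← e.sum_comp]
  refine Finset.sum_congr rfl fun l _ => ?_
  rw [mul_pow, ← mul_assoc, ← pow_add, Nat.sub_add_cancel (by omega), hroot]
  simp

lemma mem_powerSumSet_of_isApolar_squarefree {d k : ℕ} (hd : d ≠ 0) (h : Fin (d + 1) → ℂ)
    (hk : k ≤ d) {g : Polynomial ℂ} (hg : g.natDegree = k) (hsq : Squarefree g)
    (hap : IsApolar (extendZero h) d k g) : h ∈ powerSumSet d k := by
  have hg0 : g ≠ 0 := hsq.ne_zero
  have hnodup : g.roots.Nodup := Polynomial.nodup_roots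
    (PerfectField.separable_iff_squarefree.2 hsq)
  have hcard : g.roots.toFinset.card = k := by
    rw [Multiset.toFinset_card_of_nodup hnodup, ← hg]
    exact (IsAlgClosed.splits g).natDegree_eq_card_roots.symm
  have hnodal : Lagrange.nodal g.roots.toFinset id = Polynomial.C g.leadingCoeff⁻¹ * g := by
    conv_rhs => rw [(IsAlgClosed.splits g).eq_prod_roots]
    have hl : g.leadingCoeff ≠ 0 := by simpa
    rw [← mul_assoc, ← Polynomial.C_mul]
    simp only [Polynomial.leadingCoeff_mul, Polynomial.leadingCoeff_C]
    have : (Multiset.map (fun a => Polynomial.X - Polynomial.C a) g.roots).prod.leadingCoeff = 1 :=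
      Polynomial.monic_multiset_prod_of_monic _ _ fun a _ => Polynomial.monic_X_sub_C a
    rw [this, mul_one, inv_mul_cancel₀ hl, Polynomial.C_1, one_mul, Lagrange.nodal_eq,
      Finset.prod, Multiset.toFinset_val, hnodup.dedup]
    rfl
  rw [← hcard]
  refine mem_powerSumSet_of_isApolar_nodal hd h _ (by omega) ⟨by simp, fun q hq => ?_⟩
  rw [hnodal, mul_assoc, ← Polynomial.smul_eq_C_mul, map_smul, hap.2 q (by omega), smul_zero]

/-! ### Points of the projective line -/

/-- Evaluation of a binary form of degree `k` at a point of the projective line, in terms of its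
dehomogenization; `none` is the point at infinity. -/
def pointEval (k : ℕ) : Option ℂ → Polynomial ℂ →ₗ[ℂ] ℂ
  | some z => Polynomial.leval z
  | none => Polynomial.lcoeff ℂ k

lemma pointEval_some (k : ℕ) (z : ℂ) (p : Polynomial ℂ) : pointEval k (some z) p = p.eval z := rfl

lemma pointEval_none (k : ℕ) (p : Polynomial ℂ) : pointEval k none p = p.coeff k := rfl

lemma pointEval_mul {k l : ℕ} (P : Option ℂ) {p q : Polynomial ℂ} (hp : p.natDegree ≤ k)
    (hq : q.natDegree ≤ l) :
    pointEval (k + l) P (p * q) = pointEval k P p * pointEval l P q := by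
  cases P with
  | none => exact Polynomial.coeff_mul_add_eq_of_natDegree_le hp hq
  | some z => exact Polynomial.eval_mul

/-- The dehomogenized linear form vanishing at a point of the projective line. -/
def pointForm : Option ℂ → Polynomial ℂ
  | some z => Polynomial.X - Polynomial.C z
  | none => 1

lemma natDegree_pointForm_le (P : Option ℂ) : (pointForm P).natDegree ≤ 1 := by
  cases P <;> simp [pointForm]

lemma pointForm_ne_zero (P : Option ℂ) : pointForm P ≠ 0 := by
  cases P
  · exact one_ne_zero
  · exact Polynomial.X_sub_C_ne_zero _

lemma pointEval_pointForm_eq_zero_iff (P Q : Option ℂ) :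
    pointEval 1 P (pointForm Q) = 0 ↔ P = Q := by
  cases P <;> cases Q <;>
    simp [pointForm, pointEval_some, pointEval_none, sub_eq_zero, Polynomial.coeff_one]

lemma exists_pointEval_eq_one (k : ℕ) (P : Option ℂ) :
    ∃ p : Polynomial ℂ, p.natDegree ≤ k ∧ pointEval k P p = 1 := by
  cases P with
  | none => exact ⟨Polynomial.X ^ k, by simp, by simp [pointEval_none]⟩
  | some z => exact ⟨1, by simp, by simp [pointEval_some]⟩

/-! ### Squarefree members of linear systems -/

lemma finite_setOf_not_squarefree_pencil {F G : Polynomial ℂ}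
    (hFG : ∀ z, F.eval z = 0 → G.eval z ≠ 0) (hG : G.natDegree ≠ 0) :
    {ε : ℂ | ¬ Squarefree (F + Polynomial.C ε * G)}.Finite := by
  have hcop : IsCoprime F G := by
    rw [Polynomial.isCoprime_iff_aeval_ne_zero_of_isAlgClosed (k := ℂ) (K := ℂ)]
    intro a
    by_cases ha : F.eval a = 0
    · exact Or.inr (by simpa using hFG a ha)
    · exact Or.inl (by simpa using ha)
  set W := F * Polynomial.derivative G - Polynomial.derivative F * G with hWdef
  have hW : W ≠ 0 := by
    intro hW
    have hdvd : G ∣ Polynomial.derivative G := by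
      refine hcop.symm.dvd_of_dvd_mul_left ⟨Polynomial.derivative F, ?_⟩
      rw [mul_comm G]
      exact sub_eq_zero.1 hW
    have h0 : Polynomial.derivative G = 0 := by
      by_contra h0
      have h1 := Polynomial.natDegree_le_of_dvd hdvd h0
      have h2 := Polynomial.natDegree_derivative_lt hG
      omega
    exact hG (Polynomial.derivative_eq_zero.1 h0)
  refine (W.roots.toFinset.finite_toSet.image fun z => -F.eval z / G.eval z).subset fun ε hε => ?_
  rw [Set.mem_ofPred_eq, ← PerfectField.separable_iff_squarefree, Polynomial.Separable,
    Polynomial.isCoprime_iff_aeval_ne_zero_of_isAlgClosed (k := ℂ) (K := ℂ)] at hε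
  push Not at hε
  obtain ⟨z, hz, hz'⟩ := hε
  simp only [Polynomial.coe_aeval_eq_eval, Polynomial.eval_add, Polynomial.eval_mul,
    Polynomial.eval_C, Polynomial.derivative_add, Polynomial.derivative_C_mul] at hz hz'
  have hGz : G.eval z ≠ 0 := by
    intro hGz
    rw [hGz, mul_zero, add_zero] at hz
    exact hFG z hz hGz
  refine ⟨z, ?_, ?_⟩
  · simp only [Finset.mem_coe, Multiset.mem_toFinset, Polynomial.mem_roots hW, Polynomial.IsRoot, W,
      Polynomial.eval_sub, Polynomial.eval_mul]
    linear_combination (Polynomial.derivative G).eval z * hz - G.eval z * hz'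
  · field_simp
    linear_combination -hz

/-- The linear system of apolar forms of degree `d - r + 2` has no base point. -/
lemma exists_isApolar_pointEval_ne_zero {η : ℕ → ℂ} {d r : ℕ} (hr : 2 ≤ r) (hrd : r ≤ d)
    (hmin : ∀ k p, p ≠ 0 → IsApolar η d k p → r ≤ k) (P : Option ℂ) :
    ∃ g, IsApolar η d (d - r + 2) g ∧ pointEval (d - r + 2) P g ≠ 0 := by
  by_contra! hbase
  set t := d - r + 2 with ht
  let φ (j : Fin (r - 1)) : Polynomial.degreeLT ℂ (t + 1) →ₗ[ℂ] ℂ :=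
    momentFunctional η ∘ₗ LinearMap.mulRight ℂ (Polynomial.X ^ (j : ℕ)) ∘ₗ Submodule.subtype _
  have hmem {g : Polynomial ℂ} : g ∈ Polynomial.degreeLT ℂ (t + 1) ↔ g.natDegree ≤ t := by
    rw [Polynomial.mem_degreeLT, Polynomial.degree_lt_iff_coeff_zero,
      Polynomial.natDegree_le_iff_coeff_eq_zero]
    exact Iff.rfl
  have hspan : pointEval t P ∘ₗ Submodule.subtype _ ∈ Submodule.span ℂ (Set.range φ) := by
    refine mem_span_of_iInf_ker_le_ker fun g hg => ?_
    refine hbase g.1 (isApolar_iff_X_pow.2 ⟨hmem.1 g.2, fun i hi => ?_⟩)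
    exact (Submodule.mem_iInf _).1 hg ⟨i, by omega⟩
  obtain ⟨c, hc⟩ := (Submodule.mem_span_range_iff_exists_fun ℂ).1 hspan
  set b : Polynomial ℂ := ∑ j : Fin (r - 1), Polynomial.C (c j) * Polynomial.X ^ (j : ℕ) with hb
  have hbdeg : b.natDegree ≤ r - 2 := Polynomial.natDegree_sum_le_of_forall_le _ _ fun j _ =>
    (Polynomial.natDegree_C_mul_X_pow_le _ _).trans (by omega)
  have hrep (g : Polynomial ℂ) (hg : g.natDegree ≤ t) :
      momentFunctional η (g * b) = pointEval t P g := by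
    have := LinearMap.congr_fun hc ⟨g, hmem.2 hg⟩
    rw [LinearMap.comp_apply, Submodule.subtype_apply] at this
    rw [← this, hb, Finset.mul_sum, map_sum, LinearMap.sum_apply]
    refine Finset.sum_congr rfl fun j _ => ?_
    rw [mul_left_comm, ← Polynomial.smul_eq_C_mul, map_smul]
    rfl
  have hb0 : b ≠ 0 := by
    intro hb0
    obtain ⟨p, hp, hp1⟩ := exists_pointEval_eq_one t P
    have := hrep p hp
    simp [hb0, hp1] at this
  have := hmin (r - 1) (pointForm P * b) (mul_ne_zero (pointForm_ne_zero P) hb0)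
    ⟨?_, fun q hq => ?_⟩
  · omega
  · exact (Polynomial.natDegree_mul_le_of_le (natDegree_pointForm_le P) hbdeg).trans (by omega)
  · have hq' : q.natDegree ≤ t - 1 := by omega
    have hdeg := Polynomial.natDegree_mul_le_of_le (natDegree_pointForm_le P) hq'
    have hmul := pointEval_mul P (natDegree_pointForm_le P) hq'
    rw [show 1 + (t - 1) = t by omega] at hdeg hmul
    rw [mul_right_comm, hrep _ hdeg, hmul, (pointEval_pointForm_eq_zero_iff P P).2 rfl, zero_mul]

/-- The apolar forms of degree `k` form a vector space. -/
def apolarSubmodule (η : ℕ → ℂ) (d k : ℕ) : Submodule ℂ (Polynomial ℂ) where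
  carrier := {p | IsApolar η d k p}
  zero_mem' := ⟨by simp, by simp⟩
  add_mem' := fun {p q} hp hq => ⟨Polynomial.natDegree_add_le_of_degree_le hp.1 hq.1, fun u hu => by
    rw [add_mul, map_add, hp.2 u hu, hq.2 u hu, add_zero]⟩
  smul_mem' := fun c p hp => ⟨(Polynomial.natDegree_smul_le c p).trans hp.1, fun u hu => by
    rw [smul_mul_assoc, map_smul, hp.2 u hu, smul_zero]⟩

lemma exists_isApolar_squarefree {η : ℕ → ℂ} {d r : ℕ} (hr : 2 ≤ r) (hrd : r ≤ d)
    (hmin : ∀ k p, p ≠ 0 → IsApolar η d k p → r ≤ k) :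
    ∃ g : Polynomial ℂ, g.natDegree = d - r + 2 ∧ Squarefree g ∧ IsApolar η d (d - r + 2) g := by
  have hbpf := exists_isApolar_pointEval_ne_zero hr hrd hmin
  set t := d - r + 2 with ht
  obtain ⟨G, hG, hGt⟩ := hbpf none
  rw [pointEval_none] at hGt
  have hGdeg : G.natDegree = t := le_antisymm hG.1 (Polynomial.le_natDegree_of_ne_zero hGt)
  have hG0 : G ≠ 0 := by rintro rfl; simp at hGt
  obtain ⟨F, hF, hFG⟩ := Module.Dual.exists_forall_mem_ne_zero_of_forall_exists
    (apolarSubmodule η d t) (fun z : G.roots.toFinset => pointEval t (some z.1))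
    fun z => hbpf (some z.1)
  have hfin := finite_setOf_not_squarefree_pencil (F := F) (G := G) (fun z hz hGz =>
    hFG ⟨z, by simpa [hG0] using hGz⟩ hz) (by omega)
  obtain ⟨ε, hε⟩ := (hfin.union (Set.finite_singleton (-F.coeff t / G.coeff t))
    ).infinite_compl.nonempty
  simp only [Set.mem_compl_iff, Set.mem_union, Set.mem_ofPred_eq, not_or, not_not,
    Set.mem_singleton_iff] at hε
  have hmem : IsApolar η d t (F + Polynomial.C ε * G) := by
    rw [← Polynomial.smul_eq_C_mul]
    exact (apolarSubmodule η d t).add_mem hF ((apolarSubmodule η d t).smul_mem ε hG)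
  refine ⟨_, le_antisymm hmem.1 (Polynomial.le_natDegree_of_ne_zero fun h0 => hε.2 ?_), hε.1, hmem⟩
  rw [Polynomial.coeff_add, Polynomial.coeff_C_mul] at h0
  field_simp
  linear_combination h0

/-! ### Approximation by Vandermonde decompositions -/

/-- The banded matrix of the recurrence with characteristic polynomial `p`. -/
def recurrenceMatrix (d k : ℕ) (p : Polynomial ℂ) : Matrix (Fin (d - k + 1)) (Fin (d + 1)) ℂ :=
  Matrix.of fun i l => (p * Polynomial.X ^ (i : ℕ)).coeff l

lemma recurrenceMatrix_mulVec_apply {d k : ℕ} (hk : k ≤ d) {p : Polynomial ℂ}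
    (hp : p.natDegree ≤ k) (h : Fin (d + 1) → ℂ) (i : Fin (d - k + 1)) :
    (recurrenceMatrix d k p).mulVec h i =
      momentFunctional (extendZero h) (p * Polynomial.X ^ (i : ℕ)) := by
  have hdeg : (p * Polynomial.X ^ (i : ℕ)).natDegree < d + 1 :=
    (Polynomial.natDegree_mul_le_of_le hp (Polynomial.natDegree_X_pow_le _)).trans_lt (by omega)
  rw [momentFunctional_eq_sum _ hdeg, Finset.sum_range]
  simp only [extendZero_val]
  rfl

lemma recurrenceMatrix_mulVec_eq_zero_iff {d k : ℕ} (hk : k ≤ d) {p : Polynomial ℂ}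
    (hp : p.natDegree ≤ k) (h : Fin (d + 1) → ℂ) :
    (recurrenceMatrix d k p).mulVec h = 0 ↔ IsApolar (extendZero h) d k p := by
  rw [isApolar_iff_X_pow, funext_iff]
  simp only [hp, true_and, recurrenceMatrix_mulVec_apply hk hp, Pi.zero_apply]
  exact ⟨fun H i hi => H ⟨i, by omega⟩, fun H i => H i (by omega)⟩

lemma recurrenceMatrix_add_C_mul (d k : ℕ) (p q : Polynomial ℂ) (ε : ℂ) :
    recurrenceMatrix d k (p + Polynomial.C ε * q) =
      recurrenceMatrix d k p + ε • recurrenceMatrix d k q := by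
  ext i l
  simp [recurrenceMatrix, add_mul, mul_assoc]

lemma exists_recurrenceMatrix_mul_eq_one {d k : ℕ} (hk : k ≤ d) {p : Polynomial ℂ} (hp0 : p ≠ 0)
    (hp : p.natDegree ≤ k) :
    ∃ B : Matrix (Fin (d + 1)) (Fin (d - k + 1)) ℂ, recurrenceMatrix d k p * B = 1 := by
  rw [← Matrix.mulVec_surjective_iff_exists_right_inverse]
  have hinj : Function.Injective (recurrenceMatrix d k p).vecMul := by
    refine (injective_iff_map_eq_zero (recurrenceMatrix d k p).vecMulLinear).2 fun c hc => ?_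
    have hzero : p * coeffPoly c = 0 := by
      ext l
      by_cases hl : l < d + 1
      · have := congrFun hc ⟨l, hl⟩
        rw [Matrix.vecMulLinear_apply] at this
        simp only [Matrix.vecMul, dotProduct, recurrenceMatrix, Matrix.of_apply,
          Pi.zero_apply] at this
        rw [Polynomial.coeff_zero, ← this, coeffPoly, Finset.mul_sum, Polynomial.finsetSum_coeff]
        refine Finset.sum_congr rfl fun i _ => ?_
        rw [← Polynomial.C_mul_X_pow_eq_monomial, mul_left_comm, Polynomial.coeff_C_mul]
      · exact Polynomial.coeff_eq_zero_of_natDegree_lt ((Polynomial.natDegree_mul_le_of_le hp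
          (natDegree_coeffPoly_le c)).trans_lt (by omega))
    ext j
    rw [← coeff_coeffPoly c j, (mul_eq_zero.1 hzero).resolve_left hp0]
    simp
  have hrank := (Matrix.vecMul_injective_iff.1 hinj).rank_matrix
  rw [Matrix.rank, Fintype.card_fin] at hrank
  have htop : LinearMap.range (recurrenceMatrix d k p).mulVecLin = ⊤ :=
    Submodule.eq_top_of_finrank_eq (by simpa using hrank)
  exact LinearMap.range_eq_top.1 htop

/-- A kernel vector of a matrix with a right inverse deforms along a pencil of matrices. -/
lemma exists_tendsto_mulVec_eq_zero {m n : Type*} [Fintype m] [DecidableEq m] [Fintype n]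
    {A : Matrix m n ℂ} {B : Matrix n m ℂ} (hB : A * B = 1) (A' : Matrix m n ℂ) {h : n → ℂ}
    (hh : A.mulVec h = 0) :
    ∃ u : ℂ → n → ℂ, Filter.Tendsto u (nhds 0) (nhds h) ∧
      ∀ᶠ ε in nhds (0 : ℂ), (A + ε • A').mulVec (u ε) = 0 := by
  let N (ε : ℂ) : Matrix m m ℂ := (A + ε • A') * B
  have hN : Continuous N := by fun_prop
  have hN0 : N 0 = 1 := by simp [N, hB]
  refine ⟨fun ε => h - B.mulVec ((N ε)⁻¹.mulVec ((A + ε • A').mulVec h)), ?_, ?_⟩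
  · have hNinv : Filter.Tendsto (fun ε => (N ε)⁻¹) (nhds 0) (nhds (N 0)⁻¹) := by
      refine Filter.Tendsto.comp (continuousAt_matrix_inv _ ?_) (hN.tendsto 0)
      simp only [hN0, Matrix.det_one, Ring.inverse_eq_inv']
      exact continuousAt_inv₀ one_ne_zero
    have hcont : Continuous fun x : Matrix m m ℂ × ℂ =>
        h - B.mulVec (x.1.mulVec ((A + x.2 • A').mulVec h)) := by
      fun_prop
    have := (hcont.tendsto ((N 0)⁻¹, 0)).comp (hNinv.prodMk_nhds Filter.tendsto_id)
    simp only [zero_smul, add_zero, hh, Matrix.mulVec_zero, sub_zero] at this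
    exact this
  · have hdet : ∀ᶠ ε in nhds (0 : ℂ), (N ε).det ≠ 0 :=
      hN.matrix_det.continuousAt.eventually_ne (by simp [hN0])
    filter_upwards [hdet] with ε hε
    rw [Matrix.mulVec_sub, Matrix.mulVec_mulVec, Matrix.mulVec_mulVec,
      Matrix.mul_nonsing_inv _ (isUnit_iff_ne_zero.2 hε), Matrix.one_mulVec, sub_self]

lemma mem_closure_powerSumSet_of_isApolar {d k : ℕ} (hk0 : k ≠ 0) (hk : k ≤ d)
    (h : Fin (d + 1) → ℂ) {f : Polynomial ℂ} (hf0 : f ≠ 0)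
    (hf : IsApolar (extendZero h) d k f) : h ∈ closure (powerSumSet d k) := by
  obtain ⟨c, hc⟩ : ∃ c, f.eval c ≠ 0 := by
    by_contra! H
    exact hf0 (Polynomial.funext (by simpa using H))
  set G : Polynomial ℂ := (Polynomial.X - Polynomial.C c) ^ k with hGdef
  have hGdeg : G.natDegree = k := by simp [G]
  have hGmon : G.Monic := (Polynomial.monic_X_sub_C c).pow k
  have hfin := finite_setOf_not_squarefree_pencil (F := f) (G := G) (fun z hz hGz => by
    rw [hGdef, Polynomial.eval_pow, Polynomial.eval_sub, Polynomial.eval_X,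
      Polynomial.eval_C] at hGz
    exact hc (sub_eq_zero.1 (pow_eq_zero_iff hk0 |>.1 hGz) ▸ hz)) (by omega)
  obtain ⟨B, hB⟩ := exists_recurrenceMatrix_mul_eq_one hk hf0 hf.1
  have hfh : (recurrenceMatrix d k f).mulVec h = 0 :=
    (recurrenceMatrix_mulVec_eq_zero_iff hk hf.1 h).2 hf
  obtain ⟨u, hu, huA⟩ := exists_tendsto_mulVec_eq_zero hB (recurrenceMatrix d k G) hfh
  have hev : ∀ᶠ ε in nhdsWithin (0 : ℂ) {0}ᶜ, u ε ∈ powerSumSet d k := by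
    have hsq : ∀ᶠ ε in nhdsWithin (0 : ℂ) {0}ᶜ, Squarefree (f + Polynomial.C ε * G) := by
      have hcl := (hfin.subset (Set.sdiff_subset (t := {0}))).isClosed.isOpen_compl
      filter_upwards [mem_nhdsWithin_of_mem_nhds (hcl.mem_nhds fun h0 => h0.2 rfl),
        self_mem_nhdsWithin] with ε h1 h2
      by_contra h3
      exact h1 ⟨h3, h2⟩
    have hlead : ∀ᶠ ε in nhdsWithin (0 : ℂ) {0}ᶜ, f.coeff k + ε ≠ 0 := by
      by_cases hfk : f.coeff k = 0
      · filter_upwards [self_mem_nhdsWithin] with ε hε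
        simpa [hfk] using hε
      · refine ContinuousAt.eventually_ne (g := fun ε : ℂ => f.coeff k + ε) (by fun_prop)
          (by simpa using hfk) |>.filter_mono nhdsWithin_le_nhds
    filter_upwards [huA.filter_mono nhdsWithin_le_nhds, hsq, hlead] with ε h1 h2 h3
    have hdeg : (f + Polynomial.C ε * G).natDegree ≤ k :=
      Polynomial.natDegree_add_le_of_degree_le hf.1
        ((Polynomial.natDegree_C_mul_le _ _).trans hGdeg.le)
    refine mem_powerSumSet_of_isApolar_squarefree (by omega) _ hk
      (le_antisymm hdeg (Polynomial.le_natDegree_of_ne_zero ?_)) h2 ?_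
    · rw [Polynomial.coeff_add, Polynomial.coeff_C_mul]
      have : G.coeff k = 1 := by rw [← hGdeg]; exact hGmon
      rwa [this, mul_one]
    · rw [← recurrenceMatrix_mulVec_eq_zero_iff hk hdeg, recurrenceMatrix_add_C_mul]
      exact h1
  exact mem_closure_of_tendsto (hu.mono_left nhdsWithin_le_nhds) hev

/-! ### Squarefree binary forms -/

lemma irreducible_linear_form {a b : ℂ} (hab : a ≠ 0 ∨ b ≠ 0) :
    Irreducible (C a * X 0 + C b * X 1 : MvPolynomial (Fin 2) ℂ) := by
  set p : MvPolynomial (Fin 2) ℂ := C a * X 0 + C b * X 1 with hp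
  have hhom : p.IsHomogeneous 1 :=
    ((isHomogeneous_C_mul_X a 0).add (isHomogeneous_C_mul_X b 1))
  have h0 : p.coeff (Finsupp.single 0 1) = a := by
    simp [hp, coeff_C_mul, coeff_X, Finsupp.single_left_inj]
  have h1 : p.coeff (Finsupp.single 1 1) = b := by
    simp [hp, coeff_C_mul, coeff_X, Finsupp.single_left_inj]
  have hp0 : p ≠ 0 := by
    intro h
    rw [h, coeff_zero] at h0 h1
    exact hab.elim (fun h => h h0.symm) (fun h => h h1.symm)
  refine irreducible_of_totalDegree_eq_one (hhom.totalDegree hp0) fun x hx => ?_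
  refine isUnit_iff_ne_zero.2 ?_
  rintro rfl
  simp only [zero_dvd_iff] at hx
  rw [hx] at h0 h1
  exact hab.elim (fun h => h h0.symm) (fun h => h h1.symm)

lemma binForm_coeff_eq_rename_homogenize (k : ℕ) (p : Polynomial ℂ) :
    binForm k (fun j => p.coeff j) = rename (Equiv.swap (0 : Fin 2) 1) (p.homogenize k) := by
  rw [binForm, Polynomial.homogenize, map_sum, Finset.Nat.sum_antidiagonal_eq_sum_range_succ_mk,
    Finset.sum_range]
  refine Finset.sum_congr rfl fun j _ => ?_
  rw [Finsupp.update_eq_add_single (by simp), rename_monomial, Finsupp.mapDomain_add,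
    Finsupp.mapDomain_single, Finsupp.mapDomain_single, Equiv.swap_apply_left,
    Equiv.swap_apply_right, X_pow_eq_monomial, X_pow_eq_monomial, C_mul_monomial, monomial_mul,
    mul_one, mul_one, add_comm (Finsupp.single 0 _)]

/-- The linear form vanishing at a point of the projective line is nonzero, in the variables used by
`binForm`. -/
lemma rename_homogenize_pointForm (P : Option ℂ) :
    ∃ a b : ℂ, (a ≠ 0 ∨ b ≠ 0) ∧ rename (Equiv.swap (0 : Fin 2) 1) ((pointForm P).homogenize 1) =
      C a * X 0 + C b * X 1 := by
  cases P with
  | none => exact ⟨1, 0, by simp, by simp [pointForm]⟩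
  | some z => exact ⟨-z, 1, by simp, by simp [pointForm, sub_eq_add_neg, add_comm]⟩

lemma natDegree_prod_pointForm_le (S : Finset (Option ℂ)) :
    (∏ P ∈ S, pointForm P).natDegree ≤ S.card :=
  (Polynomial.natDegree_prod_le _ _).trans
    ((Finset.sum_le_card_nsmul _ _ 1 fun P _ => natDegree_pointForm_le P).trans (by simp))

lemma squarefree_binForm_prod_pointForm (S : Finset (Option ℂ)) :
    Squarefree (binForm S.card fun j => (∏ P ∈ S, pointForm P).coeff j) := by
  have hprod : (∏ P ∈ S, pointForm P).homogenize S.card = ∏ P ∈ S, (pointForm P).homogenize 1 := by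
    rw [← Polynomial.homogenize_finsetProd fun P _ => natDegree_pointForm_le P]
    simp
  rw [binForm_coeff_eq_rename_homogenize, hprod, map_prod]
  have hirr (P : Option ℂ) :
      Irreducible (rename (Equiv.swap (0 : Fin 2) 1) ((pointForm P).homogenize 1)) := by
    obtain ⟨a, b, hab, h⟩ := rename_homogenize_pointForm P
    rw [h]
    exact irreducible_linear_form hab
  refine Finset.squarefree_prod_of_pairwise_isCoprime (fun P _ Q _ hPQ => ?_)
    fun P _ => (hirr P).squarefree
  refine (hirr P).isRelPrime_iff_not_dvd.2 fun hdvd => hPQ ?_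
  have heval := map_dvd (eval (P.elim ![0, 1] fun z => ![1, z])) hdvd
  cases P <;> cases Q <;> simp [pointForm, sub_eq_zero] at heval ⊢
  exact heval

/-! ### The lower bound on Vandermonde rank -/

/-- Every Vandermonde decomposition can be rewritten with distinct points of the projective line
and nonzero weights. -/
lemma exists_pointEval_decomposition {d k : ℕ} {h : Fin (d + 1) → ℂ}
    (hh : h ∈ powerSumSet d k) :
    ∃ (S : Finset (Option ℂ)) (w : Option ℂ → ℂ), S.card ≤ k ∧ (∀ P ∈ S, w P ≠ 0) ∧
      ∀ p : Polynomial ℂ, p.natDegree ≤ d →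
        momentFunctional (extendZero h) p = ∑ P ∈ S, w P * pointEval d P p := by
  classical
  obtain ⟨ab, hab⟩ := hh
  let pt (l : Fin k) : Option ℂ := if (ab l).1 = 0 then none else some ((ab l).2 / (ab l).1)
  let wt (l : Fin k) : ℂ := if (ab l).1 = 0 then (ab l).2 ^ d else (ab l).1 ^ d
  let w (P : Option ℂ) : ℂ := ∑ l with pt l = P, wt l
  have hpt (l : Fin k) (i : ℕ) (hi : i ≤ d) :
      (ab l).1 ^ (d - i) * (ab l).2 ^ i = wt l * pointEval d (pt l) (Polynomial.X ^ i) := by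
    by_cases hl : (ab l).1 = 0
    · rcases hi.eq_or_lt with rfl | hi
      · simp [pt, wt, hl, pointEval_none]
      · simp [pt, wt, hl, pointEval_none, Polynomial.coeff_X_pow, hi.ne',
          (Nat.sub_pos_of_lt hi).ne']
    · simp only [pt, wt, hl, if_false, pointEval_some, Polynomial.eval_pow, Polynomial.eval_X]
      rw [← Nat.sub_add_cancel hi, Nat.add_sub_cancel, pow_add, div_pow]
      field_simp
  have hmono (i : ℕ) (hi : i ≤ d) : extendZero h i =
      ∑ P ∈ Finset.univ.image pt, w P * pointEval d P (Polynomial.X ^ i) := by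
    rw [show extendZero h i = _ from (extendZero_val h ⟨i, by omega⟩).trans (hab _),
      ← Finset.sum_fiberwise_of_maps_to (g := pt) fun l hl => Finset.mem_image_of_mem pt hl]
    refine Finset.sum_congr rfl fun P _ => ?_
    rw [Finset.sum_mul]
    refine Finset.sum_congr rfl fun l hl => ?_
    rw [hpt l i hi, (Finset.mem_filter.1 hl).2]
  refine ⟨(Finset.univ.image pt).filter fun P => w P ≠ 0, w, ?_, by simp, fun p hp => ?_⟩
  · exact (Finset.card_filter_le _ _).trans (Finset.card_image_le.trans (by simp))
  · rw [Finset.sum_filter_of_ne fun P _ hP => left_ne_zero_of_mul hP,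
      p.as_sum_range' (d + 1) (by omega)]
    simp only [map_sum, Finset.mul_sum]
    rw [Finset.sum_comm]
    refine Finset.sum_congr rfl fun i hi => ?_
    rw [momentFunctional_monomial, hmono i (by simp at hi; omega), Finset.mul_sum]
    refine Finset.sum_congr rfl fun P _ => ?_
    rw [← Polynomial.C_mul_X_pow_eq_monomial, ← Polynomial.smul_eq_C_mul, map_smul, smul_eq_mul]
    ring

lemma pointEval_prod_pointForm (S : Finset (Option ℂ)) (P : Option ℂ) :
    pointEval S.card P (∏ Q ∈ S, pointForm Q) = 0 ↔ P ∈ S := by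
  classical
  induction S using Finset.induction_on with
  | empty => cases P <;> simp [pointEval_some, pointEval_none]
  | insert Q S hQ ih =>
    rw [Finset.prod_insert hQ, Finset.card_insert_of_notMem hQ, add_comm,
      pointEval_mul P (natDegree_pointForm_le Q) (natDegree_prod_pointForm_le S), mul_eq_zero, ih,
      pointEval_pointForm_eq_zero_iff, Finset.mem_insert]

/-- A nonzero binary form of degree `k` has at most `k` zeros on the projective line. -/
lemma card_le_of_pointEval_eq_zero {k : ℕ} {f : Polynomial ℂ} (hf0 : f ≠ 0) (hf : f.natDegree ≤ k)
    (S : Finset (Option ℂ)) (hS : ∀ P ∈ S, pointEval k P f = 0) : S.card ≤ k := by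
  classical
  have hroots : S.eraseNone.card ≤ f.natDegree := by
    refine Polynomial.card_le_degree_of_subset_roots (p := f) fun z hz => ?_
    rw [Polynomial.mem_roots hf0]
    exact hS (some z) (by simpa using hz)
  by_cases hnone : none ∈ S
  · have hlt : f.natDegree ≠ k := by
      rintro rfl
      exact hf0 (Polynomial.leadingCoeff_eq_zero.1 (hS none hnone))
    have := Finset.card_eraseNone_of_mem hnone
    omega
  · rw [Finset.card_eraseNone_of_not_mem hnone] at hroots
    omega

lemma not_mem_powerSumSet {d r k : ℕ} (hr : 1 ≤ r) (hrd : r ≤ d) {h : Fin (d + 1) → ℂ}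
    (hmin : ∀ k p, p ≠ 0 → IsApolar (extendZero h) d k p → r ≤ k)
    {f : Polynomial ℂ} (hf0 : f ≠ 0) (hf : IsApolar (extendZero h) d r f)
    (hnsf : ∀ g : Polynomial ℂ, g ≠ 0 → IsApolar (extendZero h) d r g →
      ¬ Squarefree (binForm r fun j => g.coeff j))
    (hk : k ≤ d - r + 1) : h ∉ powerSumSet d k := by
  classical
  intro hh
  obtain ⟨S, w, hSk, hw, hL⟩ := exists_pointEval_decomposition hh
  have hvanish : ∀ P ∈ S, pointEval r P f = 0 := by
    intro P hP
    obtain ⟨u, hu, hu1⟩ := exists_pointEval_eq_one (d - r - (S.erase P).card) P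
    have hcard := Finset.card_erase_of_mem hP
    have hSpos := Finset.card_pos.2 ⟨P, hP⟩
    have hmul (Q) := pointEval_mul Q (natDegree_prod_pointForm_le (S.erase P)) hu
    have hdeg := Polynomial.natDegree_mul_le_of_le (natDegree_prod_pointForm_le (S.erase P)) hu
    rw [show (S.erase P).card + (d - r - (S.erase P).card) = d - r by omega] at hdeg hmul
    have hmul' (Q) := pointEval_mul Q hf.1 hdeg
    have hdeg' := Polynomial.natDegree_mul_le_of_le hf.1 hdeg
    rw [show r + (d - r) = d by omega] at hdeg' hmul'
    have hzero := hf.2 _ hdeg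
    rw [hL _ hdeg', Finset.sum_eq_single_of_mem P hP] at hzero
    · have hne : pointEval (S.erase P).card P (∏ Q ∈ S.erase P, pointForm Q) ≠ 0 := by
        rw [Ne, pointEval_prod_pointForm]
        simp
      rw [hmul', hmul, hu1, mul_one] at hzero
      simpa [hw P hP, hne] using hzero
    · intro Q hQ hQP
      rw [hmul', hmul, (pointEval_prod_pointForm _ _).2 (Finset.mem_erase.2 ⟨hQP, hQ⟩)]
      simp
  have hSr := card_le_of_pointEval_eq_zero hf0 hf.1 S hvanish
  have hg0 : ∏ P ∈ S, pointForm P ≠ 0 := Finset.prod_ne_zero_iff.2 fun P _ => pointForm_ne_zero P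
  have hg : IsApolar (extendZero h) d S.card (∏ P ∈ S, pointForm P) := by
    refine ⟨natDegree_prod_pointForm_le S, fun q hq => ?_⟩
    have hdeg := Polynomial.natDegree_mul_le_of_le (natDegree_prod_pointForm_le S) hq
    have hmul (Q) := pointEval_mul Q (natDegree_prod_pointForm_le S) hq
    rw [show S.card + (d - S.card) = d by omega] at hdeg hmul
    rw [hL _ hdeg]
    refine Finset.sum_eq_zero fun P hP => ?_
    rw [hmul, (pointEval_prod_pointForm S P).2 hP, zero_mul, mul_zero]
  obtain rfl : S.card = r := le_antisymm hSr (hmin _ _ hg0 hg)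
  exact hnsf _ hg0 hg (squarefree_binForm_prod_pointForm S)

/-! ### Hankel tensors -/

lemma exists_sum_eq {n m v : ℕ} (hn : 1 ≤ n) (hv : v ≤ (n - 1) * m) :
    ∃ i : Fin m → Fin n, ∑ j, (i j : ℕ) = v := by
  induction m generalizing v with
  | zero => exact ⟨Fin.elim0, by simp at hv; simp [hv]⟩
  | succ m ih =>
    obtain ⟨i, hi⟩ := ih (v := v - min v (n - 1)) (by rw [mul_add_one] at hv; omega)
    refine ⟨Fin.cons ⟨min v (n - 1), by omega⟩ i, ?_⟩
    rw [Fin.sum_univ_succ]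
    simp only [Fin.cons_zero, Fin.cons_succ, hi]
    omega

lemma prod_vand {m n : ℕ} (a b : ℂ) (i : Fin m → Fin n) :
    ∏ j, vand n a b (i j) = a ^ ((n - 1) * m - ∑ j, (i j : ℕ)) * b ^ ∑ j, (i j : ℕ) := by
  simp only [vand, Finset.prod_mul_distrib, Finset.prod_pow_eq_pow_sum]
  congr 2
  rw [Finset.sum_tsub_distrib _ fun j _ => by omega]
  simp [mul_comm]

lemma IsHankel.apply_eq {m n : ℕ} {T : Tensor m n} {h : Fin ((n - 1) * m + 1) → ℂ}
    (hT : IsHankel T h) (i : Fin m → Fin n) : T i = extendZero h (∑ j, (i j : ℕ)) :=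
  (hT i).trans (extendZero_val h _).symm

lemma sum_val_le {m n : ℕ} (i : Fin m → Fin n) : ∑ j, (i j : ℕ) ≤ (n - 1) * m := by
  have := Finset.sum_le_card_nsmul Finset.univ (fun j => (i j : ℕ)) (n - 1) fun j _ => by omega
  simpa [mul_comm] using this

lemma IsHankel.mem_vandSet_iff {m n k : ℕ} (hn : 1 ≤ n) {T : Tensor m n}
    {h : Fin ((n - 1) * m + 1) → ℂ} (hT : IsHankel T h) :
    T ∈ vandSet m n k ↔ h ∈ powerSumSet ((n - 1) * m) k := by
  refine exists_congr fun ab => ?_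
  simp only [prod_vand, hT.apply_eq]
  constructor
  · intro H v
    obtain ⟨i, hi⟩ := exists_sum_eq hn (Nat.lt_succ_iff.1 v.isLt)
    have := H i
    rwa [hi, extendZero_val] at this
  · intro H i
    have := sum_val_le i
    exact (extendZero_val h ⟨∑ j, (i j : ℕ), by omega⟩).trans (H _)

lemma IsHankel.mem_closure_vandSet {m n k : ℕ} (hn : 1 ≤ n) {T : Tensor m n}
    {h : Fin ((n - 1) * m + 1) → ℂ} (hT : IsHankel T h)
    (hh : h ∈ closure (powerSumSet ((n - 1) * m) k)) : T ∈ closure (vandSet m n k) := by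
  let Φ (u : Fin ((n - 1) * m + 1) → ℂ) : Tensor m n :=
    fun i => u ⟨∑ j, (i j : ℕ), by have := sum_val_le i; omega⟩
  have hΦ : Continuous Φ := by fun_prop
  have hTΦ : T = Φ h := funext hT
  rw [hTΦ]
  refine map_mem_closure hΦ hh fun u hu => ?_
  exact (IsHankel.mem_vandSet_iff (T := Φ u) hn fun i => rfl).2 hu

lemma vandSet_subset_symSet (m n k : ℕ) : vandSet m n k ⊆ symSet m n k :=
  fun _ ⟨ab, h⟩ => ⟨fun l => vand n (ab l).1 (ab l).2, h⟩

lemma symSet_subset_cpSet (m n k : ℕ) : symSet m n k ⊆ cpSet m n k :=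
  fun _ ⟨v, h⟩ => ⟨fun l _ => v l, h⟩

/-! ### Border rank and flattenings -/

/-- The multi-index of length `2 * m₀` obtained by concatenation. -/
def concatIndex {m₀ n : ℕ} (x y : Fin m₀ → Fin n) : Fin (2 * m₀) → Fin n :=
  Fin.append x y ∘ Fin.cast (two_mul m₀)

lemma prod_concatIndex {M : Type*} [CommMonoid M] {m₀ n : ℕ} (x y : Fin m₀ → Fin n)
    (u : Fin (2 * m₀) → Fin n → M) :
    ∏ j, u j (concatIndex x y j) =
      (∏ j, u (Fin.cast (two_mul m₀).symm (Fin.castAdd m₀ j)) (x j)) *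
        ∏ j, u (Fin.cast (two_mul m₀).symm (Fin.natAdd m₀ j)) (y j) := by
  rw [← (finCongr (two_mul m₀).symm).prod_comp, Fin.prod_univ_add]
  simp only [concatIndex, Function.comp_apply, finCongr_apply, Fin.cast_cast, Fin.cast_eq_self,
    Fin.append_left, Fin.append_right]

lemma sum_concatIndex {m₀ n : ℕ} (x y : Fin m₀ → Fin n) :
    ∑ j, (concatIndex x y j : ℕ) = ∑ j, (x j : ℕ) + ∑ j, (y j : ℕ) := by
  rw [← (finCongr (two_mul m₀).symm).sum_comp, Fin.sum_univ_add]
  simp only [concatIndex, Function.comp_apply, finCongr_apply, Fin.cast_cast, Fin.cast_eq_self,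
    Fin.append_left, Fin.append_right]

/-- The matrix flattening of a tensor of even order along chosen multi-indices. -/
def flatten {m₀ n : ℕ} {p q : Type*} (x : p → Fin m₀ → Fin n) (y : q → Fin m₀ → Fin n) :
    Tensor (2 * m₀) n →ₗ[ℂ] Matrix p q ℂ where
  toFun T := Matrix.of fun i j => T (concatIndex (x i) (y j))
  map_add' _ _ := rfl
  map_smul' _ _ := rfl

lemma flatten_apply {m₀ n : ℕ} {p q : Type*} (x : p → Fin m₀ → Fin n) (y : q → Fin m₀ → Fin n)
    (T : Tensor (2 * m₀) n) (i : p) (j : q) :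
    flatten x y T i j = T (concatIndex (x i) (y j)) :=
  rfl

lemma rank_flatten_le {m₀ n k : ℕ} {p q : Type*} [Fintype p] [Fintype q]
    (x : p → Fin m₀ → Fin n) (y : q → Fin m₀ → Fin n) {T : Tensor (2 * m₀) n}
    (hT : T ∈ cpSet (2 * m₀) n k) : (flatten x y T).rank ≤ k := by
  obtain ⟨u, hu⟩ := hT
  have : flatten x y T =
      (Matrix.of fun (i : p) (l : Fin k) =>
        ∏ j, u l (Fin.cast (two_mul m₀).symm (Fin.castAdd m₀ j)) (x i j)) *
      Matrix.of fun (l : Fin k) (i : q) =>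
        ∏ j, u l (Fin.cast (two_mul m₀).symm (Fin.natAdd m₀ j)) (y i j) := by
    ext i j
    simp only [flatten_apply, hu, prod_concatIndex, Matrix.mul_apply, Matrix.of_apply]
  rw [this]
  exact (Matrix.rank_mul_le_left _ _).trans ((Matrix.rank_le_card_width _).trans (by simp))

lemma isOpen_setOf_le_rank {p q : Type*} [Fintype p] [Fintype q] (r : ℕ) :
    IsOpen {M : Matrix p q ℂ | r ≤ M.rank} := by
  classical
  let Φ : Matrix p q ℂ →ₗ[ℂ] ((q → ℂ) →L[ℂ] (p → ℂ)) :=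
    LinearMap.toContinuousLinearMap.toLinearMap ∘ₗ Matrix.toLin'.toLinearMap
  have hΦ : Continuous Φ := Φ.continuous_of_finiteDimensional
  convert (isOpen_setOfPred_nat_le_rank (𝕜 := ℂ) (E := q → ℂ) (F := p → ℂ) r).preimage hΦ using 1
  ext M
  change r ≤ M.rank ↔ (r : Cardinal) ≤ (Matrix.toLin' M).rank
  rw [LinearMap.rank, ← Module.finrank_eq_rank, Nat.cast_le, Matrix.rank, Matrix.toLin'_apply']

lemma IsHankel.rank_hMat_le {m₀ n k : ℕ} (hn : 1 ≤ n) {T : Tensor (2 * m₀) n}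
    {h : Fin ((n - 1) * (2 * m₀) + 1) → ℂ} (hT : IsHankel T h)
    (hk : T ∈ closure (cpSet (2 * m₀) n k)) :
    (hMat ((n - 1) * (2 * m₀)) ((n - 1) * m₀) h).rank ≤ k := by
  have hd : (n - 1) * (2 * m₀) = (n - 1) * m₀ + (n - 1) * m₀ := by ring
  choose x hx using fun i : Fin ((n - 1) * (2 * m₀) - (n - 1) * m₀ + 1) =>
    exists_sum_eq (n := n) (m := m₀) (v := i) hn (by omega)
  choose y hy using fun i : Fin ((n - 1) * m₀ + 1) =>
    exists_sum_eq (n := n) (m := m₀) (v := i) hn (by omega)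
  have hflat : flatten x y T = hMat ((n - 1) * (2 * m₀)) ((n - 1) * m₀) h := by
    ext i j
    simp only [flatten_apply, hT.apply_eq, sum_concatIndex, hx, hy]
    rfl
  have hcont : Continuous (flatten x y) := (flatten x y).continuous_of_finiteDimensional
  rw [← hflat]
  obtain ⟨T', hT', hT'k⟩ := mem_closure_iff.1 hk _
    ((isOpen_setOf_le_rank (flatten x y T).rank).preimage hcont)
    (by rw [Set.mem_preimage, Set.mem_ofPred_eq])
  rw [Set.mem_preimage, Set.mem_ofPred_eq] at hT'
  exact le_trans hT' (rank_flatten_le x y hT'k)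

/-- Even order: if `r < s+1` and every nonzero kernel vector has a
non-squarefree binary form, then `rank_V(H) = d-r+2`, the border ranks equal `r`,
and `r ≤ rank_S(H) ≤ d-r+2`. -/
theorem stmt_9 (n m₀ : ℕ) (hn : 2 ≤ n) (hm : 1 ≤ m₀)
    (H : Tensor (2 * m₀) n) (h : Fin ((n - 1) * (2 * m₀) + 1) → ℂ) (hH : IsHankel H h)
    (r : ℕ) (hr : r = (hMat ((n - 1) * (2 * m₀)) ((n - 1) * m₀) h).rank)
    (hrs : r < (n - 1) * m₀ + 1)
    (hker : ∃ f : Fin (r + 1) → ℂ, f ≠ 0 ∧ (hMat ((n - 1) * (2 * m₀)) r h).mulVec f = 0)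
    (hnsf : ∀ f : Fin (r + 1) → ℂ, f ≠ 0 →
      (hMat ((n - 1) * (2 * m₀)) r h).mulVec f = 0 → ¬ Squarefree (binForm r f)) :
    vandRank H = (n - 1) * (2 * m₀) - r + 2 ∧
      bVandRank H = r ∧ bSymRank H = r ∧ brank H = r ∧
      r ≤ symRank H ∧ symRank H ≤ (n - 1) * (2 * m₀) - r + 2 := by
  have hn1 : 1 ≤ n := by omega
  have hd : (n - 1) * (2 * m₀) = (n - 1) * m₀ + (n - 1) * m₀ := by ring
  have hspos : 0 < (n - 1) * m₀ := Nat.mul_pos (by omega) (by omega)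
  have hlower (k : ℕ) (hk : H ∈ closure (cpSet (2 * m₀) n k)) : r ≤ k :=
    hr ▸ hH.rank_hMat_le hn1 hk
  have hmin (k : ℕ) (p : Polynomial ℂ) (hp0 : p ≠ 0)
      (hp : IsApolar (extendZero h) ((n - 1) * (2 * m₀)) k p) : r ≤ k :=
    hr ▸ rank_hMat_le_of_isApolar h (by omega) hp0 hp
  obtain ⟨f, hf0, hf⟩ := hker
  have hr2 : 2 ≤ r := by
    by_contra! hlt
    refine hnsf f hf0 hf ?_
    interval_cases r
    · have hf00 : f 0 ≠ 0 := fun h0 => hf0 (funext fun j => by rw [Fin.fin_one_eq_zero j, h0]; rfl)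
      have hunit : IsUnit (binForm 0 f) := by
        simpa [binForm] using hf00
      exact hunit.squarefree
    · have hne : f 0 ≠ 0 ∨ f 1 ≠ 0 := by
        by_contra! h0
        exact hf0 (funext fun j => by fin_cases j <;> simp [h0])
      simpa [binForm, Fin.sum_univ_two] using (irreducible_linear_form hne).squarefree
  have hfp0 : coeffPoly f ≠ 0 := by
    intro h0
    refine hf0 (funext fun j => ?_)
    rw [← coeff_coeffPoly f j, h0]
    simp
  have hfp := (hMat_mulVec_eq_zero_iff h f).1 hf
  have hnsf' (g : Polynomial ℂ) (hg0 : g ≠ 0)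
      (hg : IsApolar (extendZero h) ((n - 1) * (2 * m₀)) r g) :
      ¬ Squarefree (binForm r fun j => g.coeff j) := by
    refine hnsf _ (fun h0 => hg0 ?_) ((hMat_mulVec_eq_zero_iff h _).2 ?_)
    · rw [← coeffPoly_coeff hg.1, h0]
      simp [coeffPoly]
    · rwa [coeffPoly_coeff hg.1]
  have hupper : H ∈ vandSet (2 * m₀) n ((n - 1) * (2 * m₀) - r + 2) := by
    obtain ⟨g, hgdeg, hgsq, hg⟩ := exists_isApolar_squarefree hr2 (by omega) hmin
    exact (hH.mem_vandSet_iff hn1).2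
      (mem_powerSumSet_of_isApolar_squarefree (by omega) h (by omega) hgdeg hgsq hg)
  have hborder : H ∈ closure (vandSet (2 * m₀) n r) :=
    hH.mem_closure_vandSet hn1
      (mem_closure_powerSumSet_of_isApolar (by omega) (by omega) h hfp0 hfp)
  have hborderSym := closure_mono (vandSet_subset_symSet (2 * m₀) n r) hborder
  have hborderCp := closure_mono (symSet_subset_cpSet (2 * m₀) n r) hborderSym
  have hsymCp (k : ℕ) (hk : H ∈ closure (symSet (2 * m₀) n k)) : r ≤ k :=
    hlower k (closure_mono (symSet_subset_cpSet (2 * m₀) n k) hk)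
  have hvandCp (k : ℕ) (hk : H ∈ closure (vandSet (2 * m₀) n k)) : r ≤ k :=
    hsymCp k (closure_mono (vandSet_subset_symSet (2 * m₀) n k) hk)
  have hsym := vandSet_subset_symSet _ _ _ hupper
  refine ⟨IsLeast.csInf_eq ⟨hupper, fun k hk => ?_⟩, IsLeast.csInf_eq ⟨hborder, hvandCp⟩,
    IsLeast.csInf_eq ⟨hborderSym, hsymCp⟩, IsLeast.csInf_eq ⟨hborderCp, hlower⟩,
    le_csInf ⟨_, hsym⟩ fun k hk => hsymCp k (subset_closure hk), Nat.sInf_le hsym⟩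
  by_contra! hlt
  exact not_mem_powerSumSet (by omega) (by omega) hmin hfp0 hfp hnsf' (by omega)
    ((hH.mem_vandSet_iff hn1).1 hk)
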